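/- One has θ1i∧θ2j = −θ1j∧θ2i = −θ2k∧θs, and the identities obtained by cyclically permuting (i,j,k) hold as well: θ1j∧θ2k = −θ1k∧θ2j = −θ2i∧θs and θ1k∧θ2i = −θ1i∧θ2k = −θ2j∧θs. -/

import Mathlib

/-!
The generators of the exterior algebra square to zero and anticommute (`e8_mul_self`, `e8_swap`).
Expanding each product of 2-forms, deleting monomials with a repeated generator and sorting the
others by increasing index puts every side into the normal form with respect to the monomial
basis of degree four, where the two sides of each identity agree as signed sums.
-/

noncomputable section

open ExteriorAlgebra

/-- Basis 1-forms of the dual of `ℝ^8`, modelled as generators of the exterior algebra of an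
8-dimensional real vector space. -/
def e8 (i : Fin 8) : ExteriorAlgebra ℝ (Fin 8 → ℝ) :=
  ExteriorAlgebra.ι ℝ (Pi.single i 1)

def dx1 : ExteriorAlgebra ℝ (Fin 8 → ℝ) := e8 0
def dx2 : ExteriorAlgebra ℝ (Fin 8 → ℝ) := e8 1
def dx3 : ExteriorAlgebra ℝ (Fin 8 → ℝ) := e8 2
def dx4 : ExteriorAlgebra ℝ (Fin 8 → ℝ) := e8 3
def dy1 : ExteriorAlgebra ℝ (Fin 8 → ℝ) := e8 4
def dy2 : ExteriorAlgebra ℝ (Fin 8 → ℝ) := e8 5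
def dy3 : ExteriorAlgebra ℝ (Fin 8 → ℝ) := e8 6
def dy4 : ExteriorAlgebra ℝ (Fin 8 → ℝ) := e8 7

def θ0i : ExteriorAlgebra ℝ (Fin 8 → ℝ) := dy1 * dy2 - dy3 * dy4
def θ0j : ExteriorAlgebra ℝ (Fin 8 → ℝ) := dy1 * dy3 + dy2 * dy4
def θ0k : ExteriorAlgebra ℝ (Fin 8 → ℝ) := dy1 * dy4 - dy2 * dy3
def θ1i : ExteriorAlgebra ℝ (Fin 8 → ℝ) := dy1 * dx2 - dy2 * dx1 + dy4 * dx3 - dy3 * dx4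
def θ1j : ExteriorAlgebra ℝ (Fin 8 → ℝ) := dy1 * dx3 + dy2 * dx4 - dy3 * dx1 - dy4 * dx2
def θ1k : ExteriorAlgebra ℝ (Fin 8 → ℝ) := dy1 * dx4 - dy4 * dx1 + dy3 * dx2 - dy2 * dx3
def θ2i : ExteriorAlgebra ℝ (Fin 8 → ℝ) := dx1 * dx2 - dx3 * dx4
def θ2j : ExteriorAlgebra ℝ (Fin 8 → ℝ) := dx1 * dx3 + dx2 * dx4
def θ2k : ExteriorAlgebra ℝ (Fin 8 → ℝ) := dx1 * dx4 - dx2 * dx3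
def θs : ExteriorAlgebra ℝ (Fin 8 → ℝ) := -(dy1 * dx1 + dy2 * dx2 + dy3 * dx3 + dy4 * dx4)

theorem e8_mul_self (i : Fin 8) : e8 i * e8 i = 0 :=
  ExteriorAlgebra.ι_sq_zero _

theorem e8_mul_self_assoc (i : Fin 8) (a : ExteriorAlgebra ℝ (Fin 8 → ℝ)) :
    e8 i * (e8 i * a) = 0 := by
  rw [← mul_assoc, e8_mul_self, zero_mul]

/-- Anticommutation of generators, oriented by `j < i` so that rewriting with it sorts each monomial
by increasing index and terminates. -/
theorem e8_swap (i j : Fin 8) (_h : j < i) : e8 i * e8 j = -(e8 j * e8 i) :=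
  eq_neg_of_add_eq_zero_left (ExteriorAlgebra.ι_add_mul_swap _ _)

theorem e8_swap_assoc (i j : Fin 8) (h : j < i) (a : ExteriorAlgebra ℝ (Fin 8 → ℝ)) :
    e8 i * (e8 j * a) = -(e8 j * (e8 i * a)) := by
  rw [← mul_assoc, e8_swap i j h, neg_mul, mul_assoc]

theorem theta1_theta2_offdiag :
    (θ1i * θ2j = -(θ1j * θ2i) ∧ θ1i * θ2j = -(θ2k * θs)) ∧
    (θ1j * θ2k = -(θ1k * θ2j) ∧ θ1j * θ2k = -(θ2i * θs)) ∧
    (θ1k * θ2i = -(θ1i * θ2k) ∧ θ1k * θ2i = -(θ2j * θs)) := by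
  refine ⟨⟨?_, ?_⟩, ⟨?_, ?_⟩, ⟨?_, ?_⟩⟩
  all_goals
    simp (disch := decide) only [θ1i, θ1j, θ1k, θ2i, θ2j, θ2k, θs, dx1, dx2, dx3, dx4,
      dy1, dy2, dy3, dy4, mul_add, add_mul, mul_sub, sub_mul, mul_neg, neg_mul, neg_neg,
      mul_assoc, e8_swap, e8_swap_assoc, e8_mul_self_assoc, mul_zero, neg_zero]
    -- Both sides are now signed sums of the same sorted monomials.
    abel

end
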